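/- Let k ≥ 1 be an integer and let φ : ℝ → ℝ satisfy E_{t∼N(0,1)}[φ(t)²] < ∞. Define F : ℝ² → ℝ by F(x,y) = Σ_{s=1}^{2k} (−1)^s φ( x·cos(πs/k) + y·sin(πs/k) ). Then F = 0 almost everywhere (with respect to Lebesgue measure on ℝ²) if and only if the k-parity-part of φ — namely the odd part t ↦ (φ(t) − φ(−t))/2 if k is odd, and the even part t ↦ (φ(t) + φ(−t))/2 if k is even — agrees almost everywhere on ℝ with a polynomial of degree strictly less than k. In particular, if φ(t) = max(0,t) is the ReLU and k is even, then F ≠ 0, and if φ is a sigmoid and k is odd, then F ≠ 0. -/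

import Mathlib

/-!
Write `e_s = (cos (πs/k), sin (πs/k))` and let `ψ` be the `k`-parity part of `φ`. Since
`e_{s+k} = -e_s`, pairing the terms `s` and `s + k` gives
`F(x) = 2 ∑_{s=1}^{k} (-1)^s ψ(⟨x, e_s⟩)` (`Fk_eq_sum_parityPart`); in particular `φ` and `ψ`
produce the same `F`.

If `ψ` is a.e. a polynomial of degree `< k`, it suffices to treat a monomial `t ^ m` with `m < k`.
Expanding `⟨x, e_s⟩ = a ω^s + b ω^{-s}` with `ω = exp(iπ/k)` by the binomial theorem turns the
alternating sum into combinations of `∑_s ω^{s(k + 2j - m)}`, where `0 < k + 2j - m < 2k`, and these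
sums vanish (`Fk_pow`).

Conversely, if `F = 0` a.e., no Hermite expansion is needed: the `k` ridge functions
`ψ(⟨x, e_s⟩)`, `1 ≤ s ≤ k`, have pairwise independent directions and a vanishing signed sum.
Subtracting from the relation its translate along a vector orthogonal to one direction removes the
corresponding ridge function and replaces `ψ` in the direction `e_k` by a difference
`ψ(· + c) - ψ` with `c` arbitrary. By induction on the number of directions
(`ae_poly_of_ridge_sum`), the proof reduces to showing that a locally integrable function all of
whose differences are a.e. polynomials of degree `< n` is itself a.e. a polynomial of degree
`< n + 1` (`ae_poly_of_differences`). This follows from Lebesgue differentiation: the difference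
quotients of its primitive are polynomials of degree `< n + 1` converging to it a.e., and such
polynomials are closed under a.e. limits by Lagrange interpolation (`ae_poly_of_tendsto`).

For ReLU and even `k` the parity part is `|t| / 2`, and for the sigmoid and odd `k` it is bounded,
continuous and not constant; neither is a polynomial.
-/

open MeasureTheory ProbabilityTheory Real Finset

/-- The alternating sum over rotations by `π/k` of the planar extension of `φ`:
`F(x,y) = ∑_{s=1}^{2k} (-1)^s φ(x cos(πs/k) + y sin(πs/k))`. -/
noncomputable def Fk (k : ℕ) (φ : ℝ → ℝ) (x : Fin 2 → ℝ) : ℝ :=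
  ∑ s ∈ Finset.Icc 1 (2 * k),
    (-1 : ℝ) ^ s * φ (x 0 * Real.cos (π * s / k) + x 1 * Real.sin (π * s / k))

/-- The `k`-parity part of `φ`: its odd part if `k` is odd, its even part if `k` is even. -/
noncomputable def parityPart (k : ℕ) (φ : ℝ → ℝ) (t : ℝ) : ℝ :=
  (φ t + (-1 : ℝ) ^ k * φ (-t)) / 2

open Filter Topology

/-! ### Functions with polynomial differences -/

/-- Polynomials of degree `< n` are closed under almost everywhere pointwise limits: the limit is
the Lagrange interpolant of its own values at any `n` points of convergence. -/
theorem ae_poly_of_tendsto {ι : Type*} {l : Filter ι} [l.NeBot] {n : ℕ} {f : ℝ → ℝ}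
    {p : ι → Polynomial ℝ} (hp : ∀ i, (p i).degree < n)
    (h : ∀ᵐ u, Tendsto (fun i => (p i).eval u) l (𝓝 (f u))) :
    ∃ P : Polynomial ℝ, P.degree < n ∧ f =ᵐ[volume] fun t => P.eval t := by
  have hinf : {u | Tendsto (fun i => (p i).eval u) l (𝓝 (f u))}.Infinite := by
    intro hfin
    have h0 : volume {u | Tendsto (fun i => (p i).eval u) l (𝓝 (f u))} = 0 := hfin.measure_zero _
    have h1 : ∀ᵐ u : ℝ, False := by
      filter_upwards [h, measure_eq_zero_iff_ae_notMem.1 h0] with u h1 h2 using h2 h1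
    obtain ⟨u, hu⟩ := h1.exists
    exact hu
  obtain ⟨s, hs, hcard⟩ := hinf.exists_subset_card_eq n
  have hinj : Set.InjOn (id : ℝ → ℝ) s := Function.injective_id.injOn
  refine ⟨Lagrange.interpolate s id f, hcard ▸ Lagrange.degree_interpolate_lt f hinj, ?_⟩
  filter_upwards [h] with u hu
  refine tendsto_nhds_unique hu ?_
  have key : ∀ i, (p i).eval u =
      ∑ x ∈ s, (p i).eval x * (Lagrange.basis s id x).eval u := by
    intro i
    conv_lhs => rw [Lagrange.eq_interpolate (f := p i) hinj (by rw [hcard]; exact hp i)]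
    simp [Lagrange.interpolate_apply, Polynomial.eval_finsetSum]
  simp only [key, Lagrange.interpolate_apply, Polynomial.eval_finsetSum, Polynomial.eval_mul,
    Polynomial.eval_C]
  exact tendsto_finsetSum _ fun x hx => (hs hx).mul_const _

theorem exists_poly_integral {n : ℕ} (P : Polynomial ℝ) (hP : P.degree < n) :
    ∃ Q : Polynomial ℝ, Q.degree < (n + 1 : ℕ) ∧ ∀ u, ∫ t in (0 : ℝ)..u, P.eval t = Q.eval u := by
  refine ⟨∑ i ∈ range n, Polynomial.C (P.coeff i / (i + 1)) * Polynomial.X ^ (i + 1), ?_, ?_⟩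
  · refine (Polynomial.degree_sum_le _ _).trans_lt ?_
    rw [Finset.sup_lt_iff (by exact WithBot.bot_lt_coe _)]
    intro i hi
    refine (Polynomial.degree_C_mul_X_pow_le _ _).trans_lt ?_
    have := Finset.mem_range.1 hi
    exact_mod_cast Nat.succ_lt_succ this
  · intro u
    have h : ∀ t, P.eval t = ∑ i ∈ range n, P.coeff i * t ^ i := by
      intro t
      rcases eq_or_ne P 0 with rfl | h0
      · simp
      · exact Polynomial.eval_eq_sum_range'
          ((Polynomial.natDegree_lt_iff_degree_lt h0).2 hP) t
    simp only [h]
    rw [intervalIntegral.integral_finsetSum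
      fun i _ => (by fun_prop : Continuous fun t : ℝ => P.coeff i * t ^ i).intervalIntegrable _ _]
    simp only [intervalIntegral.integral_const_mul, integral_pow, Polynomial.eval_finsetSum,
      Polynomial.eval_mul, Polynomial.eval_C, Polynomial.eval_pow, Polynomial.eval_X]
    refine Finset.sum_congr rfl fun i _ => ?_
    simp
    ring

/-- A locally integrable function all of whose differences are a.e. polynomials of degree `< n` is
a.e. a polynomial of degree `< n + 1`. -/
theorem ae_poly_of_differences {n : ℕ} {f : ℝ → ℝ} (hf : LocallyIntegrable f)
    (h : ∀ c : ℝ, ∃ P : Polynomial ℝ, P.degree < n ∧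
      (fun t => f (t + c) - f t) =ᵐ[volume] fun t => P.eval t) :
    ∃ P : Polynomial ℝ, P.degree < (n + 1 : ℕ) ∧ f =ᵐ[volume] fun t => P.eval t := by
  have hi : ∀ a b, IntervalIntegrable f volume a b := fun a b =>
    intervalIntegrable_iff.2
      ((hf.integrableOn_isCompact isCompact_uIcc).mono_set Set.uIoc_subset_uIcc)
  -- Difference quotients of the primitive: `∫_0^{u+c} f - ∫_0^u f = ∫_0^u (f(t+c) - f(t)) + ∫_0^c f`.
  have hQ : ∀ c : ℝ, ∃ Q : Polynomial ℝ, Q.degree < (n + 1 : ℕ) ∧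
      ∀ u, c⁻¹ * ((∫ t in (0 : ℝ)..(u + c), f t) - ∫ t in (0 : ℝ)..u, f t) = Q.eval u := by
    intro c
    obtain ⟨P, hP, hPf⟩ := h c
    obtain ⟨Q, hQ, hQP⟩ := exists_poly_integral P hP
    refine ⟨Polynomial.C c⁻¹ * (Q + Polynomial.C (∫ t in (0 : ℝ)..c, f t)), ?_, fun u => ?_⟩
    · rw [← Polynomial.smul_eq_C_mul]
      refine (Polynomial.degree_smul_le _ _).trans_lt ?_
      refine (Polynomial.degree_add_le _ _).trans_lt (max_lt hQ ?_)
      exact Polynomial.degree_C_le.trans_lt (by exact_mod_cast Nat.succ_pos n)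
    · have h1 : ∫ t in (0 : ℝ)..u, (f (t + c) - f t) = Q.eval u := by
        rw [← hQP]
        refine intervalIntegral.integral_congr_ae ?_
        filter_upwards [hPf] with t ht _ using ht
      have h3 : IntervalIntegrable (fun t => f (t + c)) volume 0 u := by
        simpa using (hi (0 + c) (u + c)).comp_add_right c
      rw [intervalIntegral.integral_sub h3 (hi _ _), intervalIntegral.integral_comp_add_right, zero_add] at h1
      have h2 := intervalIntegral.integral_add_adjacent_intervals (hi 0 c) (hi c (u + c))
      simp only [Polynomial.eval_mul, Polynomial.eval_C, Polynomial.eval_add, ← h1, ← h2]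
      ring
  choose Q hQd hQe using hQ
  refine ae_poly_of_tendsto (l := 𝓝[≠] (0 : ℝ)) hQd ?_
  filter_upwards [LocallyIntegrable.ae_hasDerivAt_integral hf] with u hu
  have := (hu 0).tendsto_slope_zero
  simpa only [← hQe, smul_eq_mul] using this

/-! ### Vanishing sums of ridge functions -/

/-- If a sum of ridge functions on the plane vanishes almost everywhere, a locally integrable
summand whose direction is not parallel to any of the `n` others is a.e. a polynomial of degree
`< n`. Nothing is assumed about the other profiles `g i`. -/
theorem ae_poly_of_ridge_sum {ι : Type*} [DecidableEq ι] (S : Finset ι) (a b : ι → ℝ) (a₀ b₀ : ℝ)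
    (hab₀ : a₀ ≠ 0 ∨ b₀ ≠ 0) (hind : ∀ i ∈ S, a₀ * b i - b₀ * a i ≠ 0) :
    ∀ (g : ι → ℝ → ℝ) (f : ℝ → ℝ), Measurable f → LocallyIntegrable f →
      (∀ᵐ x : Fin 2 → ℝ, ∑ i ∈ S, g i (x 0 * a i + x 1 * b i) + f (x 0 * a₀ + x 1 * b₀) = 0) →
      ∃ P : Polynomial ℝ, P.degree < S.card ∧ f =ᵐ[volume] fun t => P.eval t := by
  induction S using Finset.induction_on with
  | empty =>
    intro g f hfm _ h
    refine ⟨0, by simp, ?_⟩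
    let L : (Fin 2 → ℝ) →ₗ[ℝ] ℝ := a₀ • LinearMap.proj 0 + b₀ • LinearMap.proj 1
    have hL : Function.Surjective L := by
      refine LinearMap.surjective_of_ne_zero ?_
      intro h0
      rcases hab₀ with h1 | h1
      · have := LinearMap.congr_fun h0 ![1, 0]
        simp [L] at this
        exact h1 this
      · have := LinearMap.congr_fun h0 ![0, 1]
        simp [L] at this
        exact h1 this
    have hs : MeasurableSet {t | f t = 0} := hfm (measurableSet_singleton 0)
    have := (ae_comp_linearMap_mem_iff L (volume : Measure (Fin 2 → ℝ)) (volume : Measure ℝ)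
      hL hs).1 (by
        filter_upwards [h] with x hx
        simpa [L, mul_comm] using hx)
    filter_upwards [this] with t ht
    simpa using ht
  | insert j S hj ih =>
    intro g f hfm hfi h
    rw [Finset.card_insert_of_notMem hj]
    refine ae_poly_of_differences hfi fun c => ?_
    have hd : a₀ * b j - b₀ * a j ≠ 0 := hind j (Finset.mem_insert_self _ _)
    set r : ℝ := c / (a₀ * b j - b₀ * a j) with hr
    -- `y` is orthogonal to the direction `j` and has inner product `c` with `(a₀, b₀)`.
    let y : Fin 2 → ℝ := ![r * b j, -(r * a j)]
    have hc : r * b j * a₀ - r * a j * b₀ = c := by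
      rw [hr]; field_simp
    refine ih (fun i hi => hind i (Finset.mem_insert_of_mem hi))
      (fun i t => g i (t + (y 0 * a i + y 1 * b i)) - g i t) _
      ((hfm.comp (measurable_add_const c)).sub hfm) ?_ ?_
    · refine LocallyIntegrable.sub ?_ hfi
      rw [MeasureTheory.locallyIntegrable_iff]
      intro K hK
      have hmp := measurePreserving_add_right (volume : Measure ℝ) c
      have := (hmp.integrableOn_image (MeasurableEquiv.addRight c).measurableEmbedding (f := f)
        (s := K)).1 (hfi.integrableOn_isCompact (hK.image (continuous_add_const c)))
      exact this
    · have h' := (eventually_add_right_iff (volume : Measure (Fin 2 → ℝ)) y).2 h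
      filter_upwards [h, h'] with x hx hxy
      rw [Finset.sum_insert hj] at hx hxy
      have e : ∀ α β : ℝ, (x + y) 0 * α + (x + y) 1 * β =
        (x 0 * α + x 1 * β) + (y 0 * α + y 1 * β) := fun α β => by
          simp only [Pi.add_apply]; ring
      have e0 : y 0 * a j + y 1 * b j = 0 := by simp [y]; ring
      have e1 : y 0 * a₀ + y 1 * b₀ = c := by simp [y]; linarith
      simp only [e, e0, e1, add_zero] at hxy
      rw [Finset.sum_sub_distrib]
      linarith

/-! ### Parity parts and the alternating sum of polynomials -/

theorem Fk_eq_sum_parityPart (k : ℕ) (hk : 1 ≤ k) (φ : ℝ → ℝ) (x : Fin 2 → ℝ) :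
    Fk k φ x = ∑ s ∈ Finset.Icc 1 k, (-1 : ℝ) ^ s *
      (2 * parityPart k φ (x 0 * Real.cos (π * s / k) + x 1 * Real.sin (π * s / k))) := by
  have hk' : (k : ℝ) ≠ 0 := by positivity
  have hI : ∀ n : ℕ, Finset.Icc 1 n = Finset.Ico 1 (n + 1) := fun n => by
    ext; simp
  unfold Fk
  rw [hI, hI, ← Finset.sum_Ico_consecutive _ (by omega : 1 ≤ k + 1) (by omega : k + 1 ≤ 2 * k + 1)]
  have hshift := Finset.sum_Ico_add' (fun s : ℕ => (-1 : ℝ) ^ s *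
    φ (x 0 * Real.cos (π * s / k) + x 1 * Real.sin (π * s / k))) 1 (k + 1) k
  rw [show 1 + k = k + 1 by omega, show k + 1 + k = 2 * k + 1 by omega] at hshift
  rw [← hshift, ← Finset.sum_add_distrib]
  refine Finset.sum_congr rfl fun s _ => ?_
  have harg : π * ((s + k : ℕ) : ℝ) / k = π * s / k + π := by
    push_cast; field_simp
  rw [harg, Real.cos_add_pi, Real.sin_add_pi, pow_add, parityPart,
    show x 0 * -Real.cos (π * s / k) + x 1 * -Real.sin (π * s / k)
      = -(x 0 * Real.cos (π * s / k) + x 1 * Real.sin (π * s / k)) by ring]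
  ring

theorem parityPart_parityPart (k : ℕ) (φ : ℝ → ℝ) :
    parityPart k (parityPart k φ) = parityPart k φ := by
  ext t
  have h : ((-1 : ℝ) ^ k) * (-1) ^ k = 1 := by rw [← mul_pow]; simp
  simp only [parityPart, neg_neg]
  linear_combination (φ t / 4) * h

theorem Fk_parityPart (k : ℕ) (hk : 1 ≤ k) (φ : ℝ → ℝ) : Fk k (parityPart k φ) = Fk k φ := by
  ext x
  rw [Fk_eq_sum_parityPart k hk, Fk_eq_sum_parityPart k hk, parityPart_parityPart]

/-- The alternating sum of rotations annihilates monomials of degree `< k`, because all the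
frequencies of `cos ^ m` lie strictly between `-k` and `k`. -/
theorem Fk_pow (k m : ℕ) (hm : m < k) (x : Fin 2 → ℝ) : Fk k (fun t => t ^ m) x = 0 := by
  have hk0 : 2 * k ≠ 0 := by omega
  have hkC : (k : ℂ) ≠ 0 := by exact_mod_cast (by omega : k ≠ 0)
  set ω : ℂ := Complex.exp (2 * π * Complex.I / (2 * k : ℕ)) with hω
  have hprim : IsPrimitiveRoot ω (2 * k) := Complex.isPrimitiveRoot_exp _ hk0
  have hω2k : ω ^ (2 * k) = 1 := hprim.pow_eq_one
  have hωk : ω ^ k = -1 := by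
    rw [hω, ← Complex.exp_nat_mul, ← Complex.exp_pi_mul_I]
    congr 1
    push_cast; field_simp
  have hωs : ∀ s : ℕ, ω ^ s = Complex.cos (π * s / k) + Complex.sin (π * s / k) * Complex.I := by
    intro s
    rw [hω, ← Complex.exp_nat_mul, ← Complex.exp_mul_I]
    congr 1
    push_cast; field_simp
  -- `ω ^ (2k - 1)` serves as `ω⁻¹`, so that all exponents stay natural numbers.
  have hωs' : ∀ s : ℕ, ω ^ ((2 * k - 1) * s) =
      Complex.cos (π * s / k) - Complex.sin (π * s / k) * Complex.I := by
    intro s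
    have h1 : ω ^ s * ω ^ ((2 * k - 1) * s) = 1 := by
      rw [← pow_add, show s + (2 * k - 1) * s = 2 * k * s by
        obtain ⟨r, hr⟩ : ∃ r, 2 * k = r + 1 := ⟨2 * k - 1, by omega⟩
        rw [hr]; simp; ring, pow_mul, hω2k, one_pow]
    have h2 : ω ^ s ≠ 0 := left_ne_zero_of_mul_eq_one h1
    refine mul_left_cancel₀ h2 (h1.trans ?_)
    rw [hωs]
    linear_combination (-1 : ℂ) * Complex.cos_sq_add_sin_sq (π * s / k)
      + Complex.sin (π * s / k) ^ 2 * Complex.I_sq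
  set a : ℂ := ((x 0 : ℂ) - x 1 * Complex.I) / 2 with ha
  set b : ℂ := ((x 0 : ℂ) + x 1 * Complex.I) / 2 with hb
  have hlin : ∀ s : ℕ, (x 0 : ℂ) * Complex.cos (π * s / k) + x 1 * Complex.sin (π * s / k)
      = a * ω ^ s + b * ω ^ ((2 * k - 1) * s) := by
    intro s
    rw [hωs, hωs', ha, hb]
    linear_combination (x 1 : ℂ) * Complex.sin (π * s / k) * Complex.I_sq
  have hgeom : ∀ j ∈ Finset.range (m + 1),
      ∑ s ∈ Finset.Icc 1 (2 * k), (ω ^ (k + j + (2 * k - 1) * (m - j))) ^ s = 0 := by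
    intro j hj
    have hjm : j ≤ m := by simpa [Nat.lt_succ_iff] using hj
    set ζ := ω ^ (k + j + (2 * k - 1) * (m - j)) with hζ
    have hζ1 : ζ ≠ 1 := by
      intro h
      have hd := (hprim.pow_eq_one_iff_dvd _).1 h
      obtain ⟨l, rfl⟩ := Nat.exists_eq_add_of_le hjm
      -- The exponent is congruent to `k + j - (m - j)` modulo `2k`, which lies in `(0, 2k)`.
      have hd' : ((2 * k : ℕ) : ℤ) ∣ (k + j - l : ℤ) := by
        have h3 : ((2 * k : ℕ) : ℤ) ∣ ((k + j + (2 * k - 1) * (j + l - j) : ℕ) : ℤ) := by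
          exact_mod_cast hd
        have h4 : ((k + j + (2 * k - 1) * (j + l - j) : ℕ) : ℤ)
            = ((2 * k : ℕ) : ℤ) * l + (k + j - l) := by
          rw [Nat.add_sub_cancel_left]
          push_cast [Nat.cast_sub (by omega : 1 ≤ 2 * k)]
          ring
        rw [h4] at h3
        exact (dvd_add_right (dvd_mul_right _ _)).1 h3
      have := Int.le_of_dvd (by omega) hd'
      omega
    have hζ2 : ζ ^ (2 * k) = 1 := by rw [hζ, ← pow_mul, mul_comm, pow_mul, hω2k, one_pow]
    have hI : Finset.Icc 1 (2 * k) = Finset.Ico 1 (2 * k + 1) := by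
      ext; simp
    rw [hI, Finset.sum_Ico_eq_sum_range]
    simp only [pow_add, pow_one, ← Finset.mul_sum, Nat.add_sub_cancel]
    rw [geom_sum_eq hζ1, hζ2]
    simp
  have hC : ((Fk k (fun t => t ^ m) x : ℝ) : ℂ) = 0 := by
    unfold Fk
    push_cast
    have hterm : ∀ s ∈ Finset.Icc 1 (2 * k), (-1 : ℂ) ^ s *
        ((x 0 : ℂ) * Complex.cos (π * s / k) + x 1 * Complex.sin (π * s / k)) ^ m =
        ∑ j ∈ Finset.range (m + 1), a ^ j * b ^ (m - j) * (m.choose j) *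
          (ω ^ (k + j + (2 * k - 1) * (m - j))) ^ s := by
      intro s _
      rw [hlin, add_pow, Finset.mul_sum, ← hωk]
      refine Finset.sum_congr rfl fun j _ => ?_
      simp only [mul_pow, ← pow_mul]
      rw [show (k + j + (2 * k - 1) * (m - j)) * s
        = k * s + s * j + (2 * k - 1) * s * (m - j) by ring, pow_add, pow_add]
      ring
    rw [Finset.sum_congr rfl hterm, Finset.sum_comm]
    refine Finset.sum_eq_zero fun j hj => ?_
    rw [← Finset.mul_sum, hgeom j hj, mul_zero]
  exact_mod_cast hC

theorem Fk_polynomial (k : ℕ) (P : Polynomial ℝ) (hP : P.natDegree < k) (x : Fin 2 → ℝ) :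
    Fk k (fun t => P.eval t) x = 0 := by
  have h : Fk k (fun t => P.eval t) x =
      ∑ i ∈ Finset.range k, P.coeff i * Fk k (fun t => t ^ i) x := by
    simp only [Fk, Polynomial.eval_eq_sum_range' hP, Finset.mul_sum]
    rw [Finset.sum_comm]
    refine Finset.sum_congr rfl fun i _ => Finset.sum_congr rfl fun s _ => ?_
    ring
  rw [h]
  exact Finset.sum_eq_zero fun i hi => by rw [Fk_pow k i (Finset.mem_range.1 hi), mul_zero]

/-! ### The vanishing criterion -/

theorem locallyIntegrable_of_sq_gaussian {φ : ℝ → ℝ} (hφ : Measurable φ)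
    (h2 : Integrable (fun t => φ t ^ 2) (gaussianReal 0 1)) : LocallyIntegrable φ := by
  have h1 : Integrable φ (gaussianReal 0 1) := by
    refine ((integrable_const (1 : ℝ)).add h2).mono' hφ.aestronglyMeasurable ?_
    refine Filter.Eventually.of_forall fun t => ?_
    rw [Real.norm_eq_abs]
    show |φ t| ≤ 1 + φ t ^ 2
    rw [← sq_abs]
    nlinarith [sq_nonneg (|φ t| - 1 / 2)]
  rw [gaussianReal_of_var_ne_zero _ one_ne_zero, integrable_withDensity_iff_integrable_smul'
    (measurable_gaussianPDF 0 1) (Filter.Eventually.of_forall fun _ => gaussianPDF_lt_top)] at h1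
  have hpos : ∀ t, gaussianPDFReal 0 1 t ≠ 0 := fun t =>
    (gaussianPDFReal_pos 0 1 t one_ne_zero).ne'
  have hcont : Continuous (gaussianPDFReal 0 1) := by
    unfold gaussianPDFReal
    fun_prop
  -- Divide by the Gaussian density, which is continuous and positive.
  have h3 := (h1.locallyIntegrable.locallyIntegrableOn Set.univ).continuousOn_smul
    isOpen_univ.isLocallyClosed (hcont.inv₀ hpos).continuousOn
  rw [locallyIntegrableOn_univ] at h3
  convert h3 using 1
  ext t
  simp [toReal_gaussianPDF, hpos t]

/-- `Fk k` respects a.e. equality, as preimages of null sets under nonzero linear forms are null. -/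
theorem Fk_ae_congr (k : ℕ) {f g : ℝ → ℝ} (hf : Measurable f) (hg : Measurable g)
    (h : f =ᵐ[volume] g) : Fk k f =ᵐ[volume] Fk k g := by
  have key : ∀ s : ℕ, ∀ᵐ x : Fin 2 → ℝ,
      f (x 0 * Real.cos (π * s / k) + x 1 * Real.sin (π * s / k)) =
      g (x 0 * Real.cos (π * s / k) + x 1 * Real.sin (π * s / k)) := by
    intro s
    let L : (Fin 2 → ℝ) →ₗ[ℝ] ℝ :=
      Real.cos (π * s / k) • LinearMap.proj 0 + Real.sin (π * s / k) • LinearMap.proj 1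
    have hL : Function.Surjective L := by
      refine LinearMap.surjective_of_ne_zero fun h0 => ?_
      have := LinearMap.congr_fun h0 ![Real.cos (π * s / k), Real.sin (π * s / k)]
      simp [L] at this
      nlinarith [Real.sin_sq_add_cos_sq (π * s / k)]
    have hs : MeasurableSet {t | f t = g t} := measurableSet_eq_fun hf hg
    filter_upwards [(ae_comp_linearMap_mem_iff L (volume : Measure (Fin 2 → ℝ))
      (volume : Measure ℝ) hL hs).2 h] with x hx
    simpa [L, mul_comm] using hx
  filter_upwards [ae_all_iff.2 key] with x hx
  simp only [Fk, hx]

theorem measurable_parityPart (k : ℕ) {φ : ℝ → ℝ} (hφ : Measurable φ) :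
    Measurable (parityPart k φ) := by
  unfold parityPart
  fun_prop

theorem Fk_ae_zero_iff (k : ℕ) (hk : 1 ≤ k) (φ : ℝ → ℝ) (hφ : Measurable φ)
    (h2 : Integrable (fun t => φ t ^ 2) (gaussianReal 0 1)) :
    Fk k φ =ᵐ[(volume : Measure (Fin 2 → ℝ))] 0 ↔
        ∃ P : Polynomial ℝ, P.natDegree < k ∧
          parityPart k φ =ᵐ[(volume : Measure ℝ)] fun t => Polynomial.eval t P := by
  have hm := measurable_parityPart k hφ
  constructor
  · intro h
    have hneg : Integrable (fun t => φ (-t) ^ 2) (gaussianReal 0 1) := by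
      have hmap : (gaussianReal 0 1).map (fun t => -t) = gaussianReal 0 1 := by
        rw [gaussianReal_map_neg]; simp
      have h2' := h2
      rw [← hmap] at h2'
      exact h2'.comp_measurable measurable_neg
    have hli : LocallyIntegrable (parityPart k φ) := by
      have e : parityPart k φ =
          (1 / 2 : ℝ) • (φ + ((-1 : ℝ) ^ k) • fun t => φ (-t)) := by
        ext t; simp [parityPart]; ring
      rw [e]
      exact ((locallyIntegrable_of_sq_gaussian hφ h2).add
        ((locallyIntegrable_of_sq_gaussian (hφ.comp measurable_neg) hneg).smul _)).smul _
    have hkR : (k : ℝ) ≠ 0 := by positivity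
    have hkp : (0 : ℝ) < k := by positivity
    -- Single out the direction `s = k`, that is `(-1, 0)`; it is parallel to no other `e_s`.
    obtain ⟨P, hP, hPe⟩ := ae_poly_of_ridge_sum (Finset.Ico 1 k)
      (fun s : ℕ => Real.cos (π * s / k)) (fun s : ℕ => Real.sin (π * s / k)) (-1) 0
      (Or.inl (by norm_num))
      (by
        intro s hs
        have hs' := Finset.mem_Ico.1 hs
        have h1 : (0 : ℝ) < s := by exact_mod_cast hs'.1
        have h3 : (s : ℝ) < k := by exact_mod_cast hs'.2
        have : 0 < Real.sin (π * s / k) := by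
          refine Real.sin_pos_of_pos_of_lt_pi (by positivity) ?_
          rw [div_lt_iff₀ hkp]
          exact mul_lt_mul_of_pos_left h3 Real.pi_pos
        simpa using this.ne')
      (fun s t => (-1) ^ k * (-1) ^ s * parityPart k φ t) (parityPart k φ) hm hli
      (by
        filter_upwards [h] with x hx
        rw [Fk_eq_sum_parityPart k hk] at hx
        have hI : Finset.Icc 1 k = Finset.Ico 1 (k + 1) := by ext; simp
        rw [hI, Finset.sum_Ico_succ_top hk, mul_div_assoc, div_self hkR, mul_one,
          Real.cos_pi, Real.sin_pi] at hx
        have hsq : ((-1 : ℝ) ^ k) * (-1) ^ k = 1 := by rw [← mul_pow]; simp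
        have e : ∑ i ∈ Finset.Ico 1 k, (-1 : ℝ) ^ i * (2 * parityPart k φ
            (x 0 * Real.cos (π * i / k) + x 1 * Real.sin (π * i / k))) =
            2 * ∑ i ∈ Finset.Ico 1 k, (-1 : ℝ) ^ i * parityPart k φ
            (x 0 * Real.cos (π * i / k) + x 1 * Real.sin (π * i / k)) := by
          rw [Finset.mul_sum]
          exact Finset.sum_congr rfl fun i _ => by ring
        rw [e] at hx
        simp only [mul_assoc, ← Finset.mul_sum]
        simp only [Pi.zero_apply] at hx
        linear_combination ((-1 : ℝ) ^ k / 2) * hx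
          - parityPart k φ (x 0 * -1 + x 1 * 0) * hsq)
    refine ⟨P, ?_, hPe⟩
    rcases eq_or_ne P 0 with rfl | h0
    · simpa using Nat.succ_le_iff.1 hk
    · have := (Polynomial.natDegree_lt_iff_degree_lt h0).2 hP
      rw [Nat.card_Ico] at this
      omega
  · rintro ⟨P, hP, hPe⟩
    rw [← Fk_parityPart k hk φ]
    refine (Fk_ae_congr k hm P.continuous.measurable hPe).trans ?_
    exact Filter.Eventually.of_forall fun x => Fk_polynomial k P hP x

/-! ### ReLU and sigmoid -/

theorem not_poly_relu {k : ℕ} (hk : Even k) (P : Polynomial ℝ)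
    (h : parityPart k (fun t => max 0 t) =ᵐ[volume] fun t => P.eval t) : False := by
  have hc : Continuous (parityPart k (fun t => max 0 t)) := by
    unfold parityPart
    fun_prop
  have he := (hc.ae_eq_iff_eq volume P.continuous).1 h
  have hv : ∀ t, (max 0 t + max 0 (-t)) / 2 = P.eval t := fun t => by
    have := congrFun he t
    simpa [parityPart, hk.neg_one_pow] using this
  -- On the positive half-line `|t| / 2` is `t / 2`, which pins down `P`; it fails at `-1`.
  have hP : P = Polynomial.C (1 / 2) * Polynomial.X := by
    refine Polynomial.eq_of_infinite_eval_eq _ _ ((Set.Ioi_infinite (0 : ℝ)).mono ?_)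
    intro t ht
    have ht' : (0 : ℝ) < t := ht
    have := hv t
    rw [max_eq_right ht'.le, max_eq_left (by linarith)] at this
    simp [← this]
    ring
  have := hv (-1)
  rw [hP] at this
  norm_num at this

theorem not_poly_sigmoid {k : ℕ} (hk : Odd k) (P : Polynomial ℝ)
    (h : parityPart k (fun t => 1 / (1 + Real.exp (-t))) =ᵐ[volume] fun t => P.eval t) :
    False := by
  have hpos : ∀ t : ℝ, 0 < 1 + Real.exp t := fun t => by positivity
  have hc : Continuous (parityPart k (fun t => 1 / (1 + Real.exp (-t)))) := by
    unfold parityPart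
    have h1 : Continuous fun t : ℝ => 1 / (1 + Real.exp (-t)) :=
      continuous_const.div (by fun_prop) fun t => (hpos _).ne'
    have h2 := h1.comp continuous_neg
    exact (h1.add (continuous_const.mul h2)).div_const 2
  have he := (hc.ae_eq_iff_eq volume P.continuous).1 h
  have hv : ∀ t, (1 / (1 + Real.exp (-t)) - 1 / (1 + Real.exp t)) / 2 = P.eval t := fun t => by
    have := congrFun he t
    simp only [parityPart, hk.neg_one_pow, neg_neg] at this
    rw [← this]
    ring
  have hb : ∀ t, |P.eval t| ≤ 1 := fun t => by
    rw [← hv]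
    have h1 := hpos t
    have h2 := hpos (-t)
    have b1 : 1 / (1 + Real.exp t) ≤ 1 := by
      rw [div_le_one h1]; linarith [Real.exp_pos t]
    have b2 : 1 / (1 + Real.exp (-t)) ≤ 1 := by
      rw [div_le_one h2]; linarith [Real.exp_pos (-t)]
    have p1 := one_div_pos.2 h1
    have p2 := one_div_pos.2 h2
    rw [abs_le]; constructor <;> linarith
  have hdeg : P.degree ≤ 0 := by
    refine (Polynomial.isBoundedUnder_abs_atTop_iff P).1 ⟨1, ?_⟩
    exact Filter.eventually_map.2 (Filter.Eventually.of_forall hb)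
  have h01 : P.eval 0 = P.eval 1 := by
    rw [Polynomial.eq_C_of_degree_le_zero hdeg]; simp
  rw [← hv, ← hv] at h01
  have hlt : 1 / (1 + Real.exp 1) < 1 / (1 + Real.exp (-1)) := by
    refine one_div_lt_one_div_of_lt (hpos _) ?_
    have := Real.exp_lt_exp.2 (by norm_num : (-1 : ℝ) < 1)
    linarith
  simp only [neg_zero, sub_self, zero_div] at h01
  linarith

theorem stmt16 (k : ℕ) (hk : 1 ≤ k) :
    (∀ φ : ℝ → ℝ, Measurable φ → Integrable (fun t => φ t ^ 2) (gaussianReal 0 1) →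
      (Fk k φ =ᵐ[(volume : Measure (Fin 2 → ℝ))] 0 ↔
        ∃ P : Polynomial ℝ, P.natDegree < k ∧
          parityPart k φ =ᵐ[(volume : Measure ℝ)] fun t => Polynomial.eval t P)) ∧
    (Even k → ¬ Fk k (fun t => max 0 t) =ᵐ[(volume : Measure (Fin 2 → ℝ))] 0) ∧
    (Odd k → ¬ Fk k (fun t => 1 / (1 + Real.exp (-t)))
        =ᵐ[(volume : Measure (Fin 2 → ℝ))] 0) := by
  refine ⟨fun φ hφ h2 => Fk_ae_zero_iff k hk φ hφ h2, fun hke h => ?_, fun hko h => ?_⟩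
  · have hm : Measurable fun t : ℝ => max 0 t := by fun_prop
    have hid : Integrable (fun t : ℝ => t ^ 2) (gaussianReal 0 1) :=
      (memLp_id_gaussianReal 2).integrable_sq
    have h2 : Integrable (fun t : ℝ => max 0 t ^ 2) (gaussianReal 0 1) := by
      refine hid.mono' (hm.pow_const 2).aestronglyMeasurable
        (Filter.Eventually.of_forall fun t => ?_)
      rw [Real.norm_eq_abs, abs_of_nonneg (sq_nonneg _)]
      rcases le_total 0 t with ht | ht
      · rw [max_eq_right ht]
      · rw [max_eq_left ht]; nlinarith
    obtain ⟨P, -, hP⟩ := (Fk_ae_zero_iff k hk _ hm h2).1 h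
    exact not_poly_relu hke P hP
  · have hm : Measurable fun t : ℝ => 1 / (1 + Real.exp (-t)) := by fun_prop
    have h2 : Integrable (fun t : ℝ => (1 / (1 + Real.exp (-t))) ^ 2) (gaussianReal 0 1) := by
      refine (integrable_const (1 : ℝ)).mono' (hm.pow_const 2).aestronglyMeasurable
        (Filter.Eventually.of_forall fun t => ?_)
      rw [Real.norm_eq_abs, abs_of_nonneg (sq_nonneg _)]
      have hpos : 0 < 1 + Real.exp (-t) := by positivity
      have hle : 1 / (1 + Real.exp (-t)) ≤ 1 := by
        rw [div_le_one hpos]; linarith [Real.exp_pos (-t)]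
      exact pow_le_one₀ (one_div_pos.2 hpos).le hle
    obtain ⟨P, -, hP⟩ := (Fk_ae_zero_iff k hk _ hm h2).1 h
    exact not_poly_sigmoid hko P hP
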